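/- Let g ∈ PC[0,1] be non-constant with minimal jump height h_min, maximal jump height h_max and minimal interval of constancy length l_min, and let K be a symmetric, nonnegative, normalized convolution kernel with supp K ⊆ [−κ,κ] that is strictly positive on a neighborhood of 0. If κ ≤ h_min·l_min / (2·(8·h_max + h_min)), then for every Potts parameter γ with 2·κ·h_max ≤ γ ≤ (1/2)·h_min·l_min − (h_min + 6·h_max)·κ, the function g is the unique minimizer over PC[0,1] of the L¹-Potts functional P_γ(u) = γ·J(u) + ‖u − K*g‖_{L¹[0,1]}; in particular P_γ(g) = inf_{u ∈ PC[0,1]} P_γ(u). -/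

import Mathlib

open MeasureTheory Filter Set
open scoped ENNReal Classical

noncomputable section

/-- The Lebesgue measure restricted to `[0,1]`. -/
def mu01 : Measure ℝ := volume.restrict (Set.Icc (0:ℝ) 1)

/-- The step function determined by partition points `x` and values `a`. -/
def stepF {m : ℕ} (x : Fin (m + 1) → ℝ) (a : Fin m → ℝ) : ℝ → ℝ := fun t =>
  ∑ l : Fin m, Set.indicator (Set.Ioo (x l.castSucc) (x l.succ)) (fun _ => a l) t

/-- `u` is a.e. on `[0,1]` represented by the step function with partition `x` and values `a`. -/
def IsPCRep (u : ℝ → ℝ) {m : ℕ} (x : Fin (m + 1) → ℝ) (a : Fin m → ℝ) : Prop :=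
  StrictMono x ∧ x 0 = 0 ∧ x (Fin.last m) = 1 ∧ ∀ᵐ t ∂mu01, u t = stepF x a t

/-- `u` is piecewise constant on `[0,1]` (up to a.e. equality). -/
def IsPC (u : ℝ → ℝ) : Prop :=
  ∃ (m : ℕ) (x : Fin (m + 1) → ℝ) (a : Fin m → ℝ), IsPCRep u x a

/-- The number of jumps `J(u)`: the minimal number of interior partition points over all
piecewise constant representations of `u`. -/
def jumps (u : ℝ → ℝ) : ℕ :=
  sInf {jj : ℕ | ∃ (x : Fin (jj + 2) → ℝ) (a : Fin (jj + 1) → ℝ), IsPCRep u x a}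

/-- `u` is piecewise constant with all jump locations inside `S`. -/
def IsPCIn (u : ℝ → ℝ) (S : Set ℝ) : Prop :=
  ∃ (m : ℕ) (x : Fin (m + 1) → ℝ) (a : Fin m → ℝ), IsPCRep u x a ∧
    ∀ i : Fin (m + 1), i ≠ 0 → i ≠ Fin.last m → x i ∈ S

/-- The `L¹[0,1]` distance of two functions. -/
def L1dist (u v : ℝ → ℝ) : ℝ := ∫ t, |u t - v t| ∂mu01

/-- The continuous `L¹`-Potts functional `P_γ` with data `f`. -/
def Potts (γ : ℝ) (f u : ℝ → ℝ) : ℝ≥0∞ :=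
  if IsPC u then ENNReal.ofReal (γ * (jumps u : ℝ) + L1dist u f) else ⊤

/-- The (semi-)discrete `L¹`-Potts functional with data `f`, restricted to piecewise
constant functions whose jumps lie in `S`. -/
def PottsIn (γ : ℝ) (f : ℝ → ℝ) (S : Set ℝ) (u : ℝ → ℝ) : ℝ≥0∞ :=
  if IsPCIn u S then ENNReal.ofReal (γ * (jumps u : ℝ) + L1dist u f) else ⊤

/-- Convolution `(K*g)(t) = ∫ K(s)·g(t−s) ds`. -/
def convK (K g : ℝ → ℝ) : ℝ → ℝ := fun t => ∫ s, K s * g (t - s)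

/-- The piecewise constant function on `ℝ` with jump locations `j` and values `α`
(extended constantly outside the jump region): at `t`, its value is `α i` where `i`
is the number of jump locations strictly below `t`. -/
def stepOn {n : ℕ} (j : Fin n → ℝ) (α : Fin (n + 1) → ℝ) : ℝ → ℝ := fun t =>
  α ⟨(Finset.univ.filter fun i => j i < t).card,
      Nat.lt_succ_of_le ((Finset.card_filter_le _ _).trans (by simp))⟩

/-- The jump locations together with the endpoints `0` and `1`. -/
def jext {n : ℕ} (j : Fin (n + 1) → ℝ) : Fin (n + 3) → ℝ :=
  Fin.cons (0 : ℝ) (Fin.snoc j (1 : ℝ))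

/-- The minimal length `l_min` of the intervals of constancy (inside `[0,1]`). -/
def lmin {n : ℕ} (j : Fin (n + 1) → ℝ) : ℝ :=
  Finset.univ.inf' Finset.univ_nonempty
    fun i : Fin (n + 2) => jext j i.succ - jext j i.castSucc

/-- The minimal jump height `h_min`. -/
def hjumpMin {n : ℕ} (α : Fin (n + 2) → ℝ) : ℝ :=
  Finset.univ.inf' Finset.univ_nonempty fun i : Fin (n + 1) => |α i.succ - α i.castSucc|

/-- The maximal jump height `h_max`. -/
def hjumpMax {n : ℕ} (α : Fin (n + 2) → ℝ) : ℝ :=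
  Finset.univ.sup' Finset.univ_nonempty fun i : Fin (n + 1) => |α i.succ - α i.castSucc|

/-- The (real-valued) `L¹`-Potts value `γ·J(u) + ‖u − f‖₁` for piecewise constant `u`. -/
def PottsVal (γ : ℝ) (f u : ℝ → ℝ) : ℝ := γ * (jumps u : ℝ) + L1dist u f

/-!
Around each jump `p` of `g`, on the interval of radius `L = lmin j / 2`, the data `K * g` is an
affine image of a smoothed unit step that crosses `1/2` exactly at `p`. These intervals are
disjoint and `K * g = g` outside them, so it suffices to show that on each of them a competitor
pays at least `γ`, with equality only for `g` itself. Scale the jump to height `1`. A competitor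
without partition points inside the interval is constant there, and its `L¹` distance exceeds that
of the step by more than `L - 2κ ≥ γ`. With one partition point it pays `γ`, and its `L¹` distance
is larger than that of the step unless they agree, because the data leaves the level `1/2` at `p`.
With two or more it pays `2γ`, while even the data itself would gain less than `κ ≤ γ` in `L¹`.
-/

/-- The unit step at `p`, of which `stepOn` is built. At `p` itself it takes the value `0`, the
convention of `stepOn`. -/
def unitStep (p t : ℝ) : ℝ := if p < t then 1 else 0

/-- The excess of the `L¹` distance from `u` to `f` over that from `g` to `f`, on `[c, d]`: what
the competitor `u` loses against `g` as an approximation of the data `f`. -/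
def l1Excess (f g u : ℝ → ℝ) (c d : ℝ) : ℝ := ∫ t in c..d, (|u t - f t| - |g t - f t|)

section l1Excess

variable {f f' g g' u u' : ℝ → ℝ} {c d e : ℝ}

lemma l1Excess_congr_ae (hcd : c ≤ d) (hf : f =ᵐ[volume.restrict (Ioo c d)] f')
    (hg : g =ᵐ[volume.restrict (Ioo c d)] g') (hu : u =ᵐ[volume.restrict (Ioo c d)] u') :
    l1Excess f g u c d = l1Excess f' g' u' c d := by
  refine intervalIntegral.integral_congr_ae_restrict ?_
  rw [uIoc_of_le hcd, ← restrict_Ioo_eq_restrict_Ioc]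
  filter_upwards [hf, hg, hu] with t hft hgt hut
  rw [hft, hgt, hut]

lemma l1Excess_self : l1Excess f g g c d = 0 := by simp [l1Excess]

lemma l1Excess_affine (A h : ℝ) :
    l1Excess (fun t => A + h * f t) (fun t => A + h * g t) (fun t => A + h * u t) c d =
      |h| * l1Excess f g u c d := by
  simp only [l1Excess, ← intervalIntegral.integral_const_mul, add_sub_add_left_eq_sub, ← mul_sub,
    abs_mul]

lemma l1Excess_reflect :
    l1Excess (fun t => 1 - f (-t)) (fun t => 1 - g (-t)) (fun t => 1 - u (-t)) (-d) (-c) =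
      l1Excess f g u c d := by
  simp only [l1Excess, sub_sub_sub_cancel_left]
  rw [intervalIntegral.integral_comp_neg fun t => |f t - u t| - |f t - g t|]
  simp only [neg_neg, abs_sub_comm]

lemma intervalIntegrable_abs_sub_sub_abs_sub (hf : IntervalIntegrable f volume c d)
    (hg : IntervalIntegrable g volume c d) (hu : IntervalIntegrable u volume c d) :
    IntervalIntegrable (fun t => |u t - f t| - |g t - f t|) volume c d :=
  (hu.sub hf).abs.sub (hg.sub hf).abs

lemma l1Excess_self_data_le (hcd : c ≤ d) (hf : IntervalIntegrable f volume c d)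
    (hg : IntervalIntegrable g volume c d) (hu : IntervalIntegrable u volume c d) :
    l1Excess f g f c d ≤ l1Excess f g u c d := by
  refine intervalIntegral.integral_mono_on hcd
    (intervalIntegrable_abs_sub_sub_abs_sub hf hg hf)
    (intervalIntegrable_abs_sub_sub_abs_sub hf hg hu) fun t _ => ?_
  rw [sub_self, abs_zero]
  gcongr
  exact abs_nonneg _

lemma mul_sub_le_l1Excess {C : ℝ} (hcd : c ≤ d) (hf : IntervalIntegrable f volume c d)
    (hg : IntervalIntegrable g volume c d) (hu : IntervalIntegrable u volume c d)
    (hC : ∀ t ∈ Ioo c d, C ≤ |u t - f t| - |g t - f t|) : C * (d - c) ≤ l1Excess f g u c d := by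
  calc C * (d - c) = ∫ _ in c..d, C := by
        rw [intervalIntegral.integral_const, smul_eq_mul, mul_comm]
    _ ≤ l1Excess f g u c d :=
      intervalIntegral.integral_mono_on_of_le_Ioo hcd intervalIntegrable_const
        (intervalIntegrable_abs_sub_sub_abs_sub hf hg hu) hC

lemma mul_sub_lt_l1Excess {C : ℝ} (hcd : c < d) (hf : IntervalIntegrable f volume c d)
    (hg : IntervalIntegrable g volume c d) (hu : IntervalIntegrable u volume c d)
    (hC : ∀ t ∈ Ioo c d, C < |u t - f t| - |g t - f t|) : C * (d - c) < l1Excess f g u c d := by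
  have hint := intervalIntegrable_abs_sub_sub_abs_sub hf hg hu
  have hpos := intervalIntegral.intervalIntegral_pos_of_pos_on
    (hint.sub (intervalIntegrable_const (c := C))) (fun t ht => sub_pos.2 (hC t ht)) hcd
  rw [intervalIntegral.integral_sub hint intervalIntegrable_const,
    intervalIntegral.integral_const, smul_eq_mul, mul_comm] at hpos
  exact sub_pos.1 hpos

lemma l1Excess_add_adjacent (hf : ∀ c d, IntervalIntegrable f volume c d)
    (hg : ∀ c d, IntervalIntegrable g volume c d) (hu : ∀ c d, IntervalIntegrable u volume c d) :
    l1Excess f g u c d + l1Excess f g u d e = l1Excess f g u c e :=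
  intervalIntegral.integral_add_adjacent_intervals
    (intervalIntegrable_abs_sub_sub_abs_sub (hf _ _) (hg _ _) (hu _ _))
    (intervalIntegrable_abs_sub_sub_abs_sub (hf _ _) (hg _ _) (hu _ _))

end l1Excess

lemma monotone_unitStep (p : ℝ) : Monotone (unitStep p) := fun s t hst => by
  unfold unitStep
  split_ifs <;> linarith

lemma intervalIntegrable_unitStep (p c d : ℝ) : IntervalIntegrable (unitStep p) volume c d :=
  (monotone_unitStep p).intervalIntegrable

lemma unitStep_of_le {p t : ℝ} (h : t ≤ p) : unitStep p t = 0 := if_neg h.not_gt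

lemma unitStep_of_lt {p t : ℝ} (h : p < t) : unitStep p t = 1 := if_pos h

lemma unitStep_neg_eq_one_sub {p t : ℝ} (ht : t ≠ -p) : unitStep (-p) t = 1 - unitStep p (-t) := by
  rcases ht.lt_or_gt with h | h
  · rw [unitStep_of_le h.le, unitStep_of_lt (by linarith), sub_self]
  · rw [unitStep_of_lt h, unitStep_of_le (by linarith), sub_zero]

lemma l1Excess_unitStep_reflect {F v : ℝ → ℝ} {p c d : ℝ} (hcd : c ≤ d) :
    l1Excess (fun t => 1 - F (-t)) (unitStep (-p)) (fun t => 1 - v (-t)) (-d) (-c) =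
      l1Excess F (unitStep p) v c d := by
  refine (l1Excess_congr_ae (neg_le_neg hcd) .rfl ?_ .rfl).trans l1Excess_reflect
  filter_upwards [ae_restrict_of_ae (Measure.ae_ne volume (-p))] with t ht
  exact unitStep_neg_eq_one_sub ht

/-- `F` is a smoothed unit step: it passes from `0` to `1` within distance `κ` of `p`, crossing the
level `1/2` exactly at `p`. Convolution with an admissible kernel turns `unitStep p` into such an
`F`; the value `F p` is left free. -/
structure IsTransition (F : ℝ → ℝ) (p κ : ℝ) : Prop where
  measurable : Measurable F
  nonneg : ∀ t, 0 ≤ F t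
  le_one : ∀ t, F t ≤ 1
  eq_zero : ∀ t ≤ p - κ, F t = 0
  eq_one : ∀ t ≥ p + κ, F t = 1
  lt_half : ∀ t < p, F t < 1 / 2
  half_lt : ∀ t > p, 1 / 2 < F t

lemma isTransition_unitStep (p : ℝ) {κ : ℝ} (hκ : 0 < κ) : IsTransition (unitStep p) p κ where
  measurable := (monotone_unitStep p).measurable
  nonneg t := by unfold unitStep; split_ifs <;> norm_num
  le_one t := by unfold unitStep; split_ifs <;> norm_num
  eq_zero t ht := unitStep_of_le (by linarith)
  eq_one t ht := unitStep_of_lt (by linarith)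
  lt_half t ht := by rw [unitStep_of_le ht.le]; norm_num
  half_lt t ht := by rw [unitStep_of_lt ht]; norm_num

namespace IsTransition

variable {F v : ℝ → ℝ} {p κ L a b c d e s : ℝ}

lemma pos (hF : IsTransition F p κ) : 0 < κ := by
  by_contra! hκ
  have h0 := hF.eq_zero p (by linarith)
  have h1 := hF.eq_one p (by linarith)
  linarith

lemma reflect (hF : IsTransition F p κ) : IsTransition (fun t => 1 - F (-t)) (-p) κ where
  measurable := (hF.measurable.comp measurable_neg).const_sub 1
  nonneg t := by linarith [hF.le_one (-t)]
  le_one t := by linarith [hF.nonneg (-t)]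
  eq_zero t ht := by rw [hF.eq_one (-t) (by linarith), sub_self]
  eq_one t ht := by rw [hF.eq_zero (-t) (by linarith), sub_zero]
  lt_half t ht := by linarith [hF.half_lt (-t) (by linarith)]
  half_lt t ht := by linarith [hF.lt_half (-t) (by linarith)]

lemma integrable {μ : Measure ℝ} [IsFiniteMeasure μ] (hF : IsTransition F p κ) :
    Integrable F μ := by
  refine Integrable.of_bound hF.measurable.aestronglyMeasurable 1 (ae_of_all _ fun t => ?_)
  rw [Real.norm_eq_abs, abs_of_nonneg (hF.nonneg t)]
  exact hF.le_one t

lemma intervalIntegrable (hF : IsTransition F p κ) (c d : ℝ) : IntervalIntegrable F volume c d :=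
  ⟨hF.integrable, hF.integrable⟩

lemma eq_unitStep (hF : IsTransition F p κ) {t : ℝ} (ht : t ∉ Ioo (p - κ) (p + κ)) :
    F t = unitStep p t := by
  rcases le_or_gt t (p - κ) with h | h
  · rw [hF.eq_zero t h, unitStep_of_le (by linarith [hF.pos])]
  · have h' : p + κ ≤ t := not_lt.1 fun hlt => ht ⟨h, hlt⟩
    rw [hF.eq_one t h', unitStep_of_lt (by linarith [hF.pos])]

lemma l1Excess_add (hF : IsTransition F p κ) (hv : ∀ c d, IntervalIntegrable v volume c d) :
    l1Excess F (unitStep p) v c d + l1Excess F (unitStep p) v d e =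
      l1Excess F (unitStep p) v c e :=
  l1Excess_add_adjacent hF.intervalIntegrable (intervalIntegrable_unitStep p) hv

lemma l1Excess_const_add (hF : IsTransition F p κ) :
    l1Excess F (unitStep p) (fun _ => a) c d + l1Excess F (unitStep p) (fun _ => a) d e =
      l1Excess F (unitStep p) (fun _ => a) c e :=
  hF.l1Excess_add fun _ _ => intervalIntegrable_const

lemma abs_mul_le_l1Excess_const (hF : IsTransition F p κ) (hcd : c ≤ d) (hd : d ≤ p - κ) :
    |a| * (d - c) ≤ l1Excess F (unitStep p) (fun _ => a) c d := by
  refine mul_sub_le_l1Excess hcd (hF.intervalIntegrable _ _) (intervalIntegrable_unitStep _ _ _)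
    intervalIntegrable_const fun t ht => ?_
  rw [hF.eq_zero t (by linarith [ht.2]), unitStep_of_le (by linarith [ht.2, hF.pos])]
  simp

lemma abs_sub_one_mul_le_l1Excess_const (hF : IsTransition F p κ) (hcd : c ≤ d)
    (hc : p + κ ≤ c) : |a - 1| * (d - c) ≤ l1Excess F (unitStep p) (fun _ => a) c d := by
  refine mul_sub_le_l1Excess hcd (hF.intervalIntegrable _ _) (intervalIntegrable_unitStep _ _ _)
    intervalIntegrable_const fun t ht => ?_
  rw [hF.eq_one t (by linarith [ht.1]), unitStep_of_lt (by linarith [ht.1, hF.pos])]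
  simp

lemma neg_abs_mul_le_l1Excess_const (hF : IsTransition F p κ) (hcd : c ≤ d) (hd : d ≤ p) :
    -|a| * (d - c) ≤ l1Excess F (unitStep p) (fun _ => a) c d := by
  refine mul_sub_le_l1Excess hcd (hF.intervalIntegrable _ _) (intervalIntegrable_unitStep _ _ _)
    intervalIntegrable_const fun t ht => ?_
  rw [unitStep_of_le (by linarith [ht.2])]
  linarith [abs_sub_le 0 a (F t), abs_sub_comm 0 a, congrArg abs (sub_zero a)]

lemma neg_abs_sub_one_mul_le_l1Excess_const (hF : IsTransition F p κ) (hcd : c ≤ d)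
    (hc : p ≤ c) : -|a - 1| * (d - c) ≤ l1Excess F (unitStep p) (fun _ => a) c d := by
  refine mul_sub_le_l1Excess hcd (hF.intervalIntegrable _ _) (intervalIntegrable_unitStep _ _ _)
    intervalIntegrable_const fun t ht => ?_
  rw [unitStep_of_lt (by linarith [ht.1])]
  linarith [abs_sub_le 1 a (F t), abs_sub_comm 1 a]

lemma neg_abs_mul_lt_l1Excess_const (hF : IsTransition F p κ) (hcd : c < d) (hc : p ≤ c) :
    -|a| * (d - c) < l1Excess F (unitStep p) (fun _ => a) c d := by
  refine mul_sub_lt_l1Excess hcd (hF.intervalIntegrable _ _) (intervalIntegrable_unitStep _ _ _)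
    intervalIntegrable_const fun t ht => ?_
  have hpt : p < t := by linarith [ht.1]
  rw [unitStep_of_lt hpt, abs_of_nonneg (sub_nonneg.2 (hF.le_one t))]
  linarith [hF.half_lt t hpt, le_abs_self (F t), abs_sub_abs_le_abs_sub (F t) a,
    abs_sub_comm a (F t)]

lemma neg_half_lt_l1Excess_data (hF : IsTransition F p κ) (hL : κ ≤ L) :
    -(κ / 2) < l1Excess F (unitStep p) F p (p + L) := by
  have hnear : -(1 / 2) * (p + κ - p) < l1Excess F (unitStep p) F p (p + κ) := by
    refine mul_sub_lt_l1Excess (by linarith [hF.pos]) (hF.intervalIntegrable _ _)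
      (intervalIntegrable_unitStep _ _ _) (hF.intervalIntegrable _ _) fun t ht => ?_
    rw [unitStep_of_lt ht.1, abs_of_nonneg (sub_nonneg.2 (hF.le_one t)), sub_self, abs_zero]
    linarith [hF.half_lt t ht.1]
  have hfar : 0 * (p + L - (p + κ)) ≤ l1Excess F (unitStep p) F (p + κ) (p + L) := by
    refine mul_sub_le_l1Excess (by linarith) (hF.intervalIntegrable _ _)
      (intervalIntegrable_unitStep _ _ _) (hF.intervalIntegrable _ _) fun t ht => ?_
    rw [hF.eq_unitStep fun h => h.2.not_gt ht.1, sub_self]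
  linarith [hF.l1Excess_add (c := p) (d := p + κ) (e := p + L) hF.intervalIntegrable]

lemma neg_lt_l1Excess (hF : IsTransition F p κ) (hL : κ ≤ L)
    (hv : IntervalIntegrable v volume (p - L) (p + L)) :
    -κ < l1Excess F (unitStep p) v (p - L) (p + L) := by
  have hright := hF.neg_half_lt_l1Excess_data hL
  have hleft : -(κ / 2) < l1Excess F (unitStep p) F (p - L) p := by
    rw [← l1Excess_unitStep_reflect (by linarith [hF.pos]), neg_sub, sub_eq_neg_add L p]
    exact hF.reflect.neg_half_lt_l1Excess_data hL
  calc -κ < l1Excess F (unitStep p) F (p - L) p + l1Excess F (unitStep p) F p (p + L) := by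
        linarith
    _ = l1Excess F (unitStep p) F (p - L) (p + L) := hF.l1Excess_add hF.intervalIntegrable
    _ ≤ l1Excess F (unitStep p) v (p - L) (p + L) :=
        l1Excess_self_data_le (by linarith [hF.pos]) (hF.intervalIntegrable _ _)
          (intervalIntegrable_unitStep _ _ _) hv

lemma sub_lt_l1Excess_const (hF : IsTransition F p κ) (hL : κ ≤ L) :
    L - 2 * κ < l1Excess F (unitStep p) (fun _ => a) (p - L) (p + L) := by
  have hleft := hF.abs_mul_le_l1Excess_const (a := a) (c := p - L) (by linarith) le_rfl
  have hmid := hF.neg_lt_l1Excess (L := κ) (v := fun _ => a) le_rfl intervalIntegrable_const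
  have hright := hF.abs_sub_one_mul_le_l1Excess_const (a := a) (d := p + L) (by linarith) le_rfl
  have hsum : 1 * (L - κ) ≤ (|a| + |a - 1|) * (L - κ) := by
    gcongr
    linarith [le_abs_self a, neg_abs_le (a - 1)]
  linarith [hF.l1Excess_const_add (a := a) (c := p - L) (d := p - κ) (e := p + L),
    hF.l1Excess_const_add (a := a) (c := p - κ) (d := p + κ) (e := p + L)]

lemma l1Excess_const_pos (hF : IsTransition F p κ) (hL : 3 * κ ≤ L) (hs : p < s) :
    0 < l1Excess F (unitStep p) (fun _ => a) (p - L) s := by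
  wlog hsκ : s ≤ p + κ generalizing s
  · have hnear := this (s := p + κ) (by linarith [hF.pos]) le_rfl
    have hfar := hF.abs_sub_one_mul_le_l1Excess_const (a := a) (le_of_not_ge hsκ) le_rfl
    have hnonneg : 0 ≤ |a - 1| * (s - (p + κ)) :=
      mul_nonneg (abs_nonneg _) (by linarith)
    linarith [hF.l1Excess_const_add (a := a) (c := p - L) (d := p + κ) (e := s)]
  have hfar := hF.abs_mul_le_l1Excess_const (a := a) (c := p - L) (by linarith [hF.pos]) le_rfl
  have hleft := hF.neg_abs_mul_le_l1Excess_const (a := a) (c := p - κ) (by linarith [hF.pos]) le_rfl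
  have hright := hF.neg_abs_mul_lt_l1Excess_const (a := a) hs le_rfl
  have hnonneg : 0 ≤ |a| * (L - κ - κ - (s - p)) :=
    mul_nonneg (abs_nonneg _) (by linarith)
  linarith [hF.l1Excess_const_add (a := a) (c := p - L) (d := p - κ) (e := s),
    hF.l1Excess_const_add (a := a) (c := p - κ) (d := p) (e := s)]

lemma abs_sub_one_mul_le_l1Excess_const_of_le (hF : IsTransition F p κ) (hL : κ ≤ L)
    (hs : p ≤ s) (hsκ : s ≤ p + κ) :
    |a - 1| * (L - 2 * κ) ≤ l1Excess F (unitStep p) (fun _ => a) s (p + L) := by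
  have hnear := hF.neg_abs_sub_one_mul_le_l1Excess_const (a := a) hsκ hs
  have hfar := hF.abs_sub_one_mul_le_l1Excess_const (a := a) (d := p + L) (by linarith) le_rfl
  have hnonneg : 0 ≤ |a - 1| * (s - p) := mul_nonneg (abs_nonneg _) (by linarith)
  linarith [hF.l1Excess_const_add (a := a) (c := s) (d := p + κ) (e := p + L)]

lemma l1Excess_const_nonneg (hF : IsTransition F p κ) (hL : 2 * κ ≤ L) (hs : p ≤ s)
    (hsL : s ≤ p + L) : 0 ≤ l1Excess F (unitStep p) (fun _ => a) s (p + L) := by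
  rcases le_total s (p + κ) with hsκ | hsκ
  · refine le_trans (mul_nonneg (abs_nonneg (a - 1)) (by linarith))
      (hF.abs_sub_one_mul_le_l1Excess_const_of_le (by linarith [hF.pos]) hs hsκ)
  · exact (mul_nonneg (abs_nonneg _) (by linarith)).trans
      (hF.abs_sub_one_mul_le_l1Excess_const hsL hsκ)

lemma l1Excess_ite (hF : IsTransition F p κ) (hcs : c ≤ s) (hsd : s ≤ d) :
    l1Excess F (unitStep p) (fun t => if s < t then b else a) c d =
      l1Excess F (unitStep p) (fun _ => a) c s + l1Excess F (unitStep p) (fun _ => b) s d := by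
  have haffine : (fun t => if s < t then b else a) = fun t => a + (b - a) * unitStep s t := by
    ext t
    unfold unitStep
    split_ifs <;> ring
  have hv : ∀ c d, IntervalIntegrable (fun t => if s < t then b else a) volume c d := fun c d =>
    haffine ▸ intervalIntegrable_const.add ((intervalIntegrable_unitStep s c d).const_mul _)
  rw [← hF.l1Excess_add (d := s) hv]
  congr 1
  · exact l1Excess_congr_ae hcs .rfl .rfl
      (ae_restrict_of_forall_mem measurableSet_Ioo fun t ht => if_neg ht.2.not_gt)
  · exact l1Excess_congr_ae hsd .rfl .rfl
      (ae_restrict_of_forall_mem measurableSet_Ioo fun t ht => if_pos ht.1)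

lemma l1Excess_ite_pos_of_lt (hF : IsTransition F p κ) (hL : 3 * κ ≤ L) (hps : p < s)
    (hsL : s ≤ p + L) :
    0 < l1Excess F (unitStep p) (fun t => if s < t then b else a) (p - L) (p + L) := by
  rw [hF.l1Excess_ite (by linarith [hF.pos]) hsL]
  exact add_pos_of_pos_of_nonneg (hF.l1Excess_const_pos hL hps)
    (hF.l1Excess_const_nonneg (by linarith [hF.pos]) hps.le hsL)

lemma l1Excess_ite_pos_of_gt (hF : IsTransition F p κ) (hL : 3 * κ ≤ L) (hsp : s < p)
    (hsL : p - L ≤ s) :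
    0 < l1Excess F (unitStep p) (fun t => if s < t then b else a) (p - L) (p + L) := by
  have hreflect := hF.reflect.l1Excess_ite_pos_of_lt (a := 1 - b) (b := 1 - a) hL
    (neg_lt_neg hsp) (by linarith)
  rw [← l1Excess_unitStep_reflect (by linarith [hF.pos]), neg_add', neg_sub, sub_eq_neg_add L p]
  convert hreflect using 1
  refine l1Excess_congr_ae (by linarith [hF.pos]) .rfl .rfl ?_
  filter_upwards [ae_restrict_of_ae (Measure.ae_ne volume (-s))] with t ht
  rcases ht.lt_or_gt with h | h
  · rw [if_pos (by linarith), if_neg h.not_gt]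
  · rw [if_neg (by linarith), if_pos h]

lemma abs_add_abs_mul_le_l1Excess_ite (hF : IsTransition F p κ) (hL : κ ≤ L) :
    (|a| + |b - 1|) * (L - 2 * κ) ≤
      l1Excess F (unitStep p) (fun t => if p < t then b else a) (p - L) (p + L) := by
  have hleft : |a| * (L - 2 * κ) ≤ l1Excess F (unitStep p) (fun _ => a) (p - L) p := by
    rw [← l1Excess_unitStep_reflect (by linarith [hF.pos]), neg_sub, sub_eq_neg_add L p]
    simpa using hF.reflect.abs_sub_one_mul_le_l1Excess_const_of_le (a := 1 - a) hL le_rfl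
      (by linarith [hF.pos])
  have hright := hF.abs_sub_one_mul_le_l1Excess_const_of_le (a := b) hL le_rfl
    (by linarith [hF.pos])
  rw [hF.l1Excess_ite (by linarith [hF.pos]) (by linarith [hF.pos])]
  linarith

lemma l1Excess_ite_pos (hF : IsTransition F p κ) (hL : 3 * κ ≤ L) (hs : s ∈ Icc (p - L) (p + L))
    (hne : ¬(s = p ∧ a = 0 ∧ b = 1)) :
    0 < l1Excess F (unitStep p) (fun t => if s < t then b else a) (p - L) (p + L) := by
  rcases lt_trichotomy s p with hsp | rfl | hps
  · exact hF.l1Excess_ite_pos_of_gt hL hsp hs.1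
  · have habs : 0 < |a| + |b - 1| := by
      rcases eq_or_ne a 0 with rfl | ha
      · have hb : b - 1 ≠ 0 := fun hb => hne ⟨rfl, rfl, sub_eq_zero.1 hb⟩
        positivity
      · positivity
    exact (mul_pos habs (by linarith [hF.pos])).trans_le
      (hF.abs_add_abs_mul_le_l1Excess_ite (by linarith [hF.pos]))
  · exact hF.l1Excess_ite_pos_of_lt hL hps hs.2

end IsTransition

/-- The distribution function of the kernel `K`, which is what convolution with `K` makes of
`unitStep 0`. -/
def kernelCDF (K : ℝ → ℝ) (r : ℝ) : ℝ := ∫ s in Iic r, K s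

section kernelCDF

variable {K : ℝ → ℝ} {κ c d r : ℝ}

lemma monotone_kernelCDF (hKint : Integrable K) (hKpos : ∀ x, 0 ≤ K x) :
    Monotone (kernelCDF K) := fun _ _ h =>
  setIntegral_mono_set hKint.integrableOn (ae_of_all _ hKpos) (Iic_subset_Iic.2 h).eventuallyLE

lemma kernelCDF_lt (hKint : Integrable K) (hcd : c < d) (hK : ∀ s ∈ Ioo c d, 0 < K s) :
    kernelCDF K c < kernelCDF K d := by
  have hpos := intervalIntegral.intervalIntegral_pos_of_pos_on hKint.intervalIntegrable hK hcd
  rw [← intervalIntegral.integral_Iic_sub_Iic hKint.integrableOn hKint.integrableOn] at hpos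
  exact sub_pos.1 hpos

lemma kernelCDF_zero (hKint : Integrable K) (hKsym : ∀ x, K (-x) = K x) :
    kernelCDF K 0 = (∫ x, K x) / 2 := by
  have hhalves : ∫ s in Iic 0, K s = ∫ s in Ioi 0, K s := by
    simpa only [hKsym, neg_zero] using integral_comp_neg_Iic (0 : ℝ) K
  have hsum := integral_add_compl (measurableSet_Iic (a := (0 : ℝ))) hKint
  rw [compl_Iic, ← hhalves] at hsum
  rw [kernelCDF, ← hsum, add_self_div_two]

lemma kernelCDF_eq_zero (hKsupp : Function.support K ⊆ Icc (-κ) κ) (hr : r ≤ -κ) :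
    kernelCDF K r = 0 := by
  rw [kernelCDF, integral_Iic_eq_integral_Iio]
  exact setIntegral_eq_zero_of_forall_eq_zero fun _ hs => Function.notMem_support.1 fun h =>
    (mem_Iio.1 hs).not_ge (hr.trans (hKsupp h).1)

lemma kernelCDF_eq_integral (hKsupp : Function.support K ⊆ Icc (-κ) κ) (hr : κ ≤ r) :
    kernelCDF K r = ∫ x, K x :=
  setIntegral_eq_integral_of_forall_compl_eq_zero fun _ hs => Function.notMem_support.1 fun h =>
    hs ((hKsupp h).2.trans hr)

lemma kernelCDF_lt_kernelCDF_zero (hKint : Integrable K) (hKpos : ∀ x, 0 ≤ K x)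
    (hKpos0 : ∃ ε > 0, ∀ x : ℝ, |x| < ε → 0 < K x) (hr : r < 0) :
    kernelCDF K r < kernelCDF K 0 := by
  obtain ⟨ε, hε, hK⟩ := hKpos0
  refine (monotone_kernelCDF hKint hKpos (le_max_left r (-ε))).trans_lt
    (kernelCDF_lt hKint (max_lt hr (neg_lt_zero.2 hε)) fun s hs => hK s ?_)
  exact abs_lt.2 ⟨(le_max_right _ _).trans_lt hs.1, hs.2.trans hε⟩

lemma kernelCDF_zero_lt_kernelCDF (hKint : Integrable K) (hKpos : ∀ x, 0 ≤ K x)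
    (hKpos0 : ∃ ε > 0, ∀ x : ℝ, |x| < ε → 0 < K x) (hr : 0 < r) :
    kernelCDF K 0 < kernelCDF K r := by
  obtain ⟨ε, hε, hK⟩ := hKpos0
  refine (kernelCDF_lt hKint (lt_min hr hε) fun s hs => hK s ?_).trans_le
    (monotone_kernelCDF hKint hKpos (min_le_left r ε))
  exact abs_lt.2 ⟨(neg_lt_zero.2 hε).trans hs.1, hs.2.trans_le (min_le_right _ _)⟩

lemma isTransition_kernelCDF (hKint : Integrable K) (hKpos : ∀ x, 0 ≤ K x)
    (hKnorm : (∫ x, K x) = 1) (hKsupp : Function.support K ⊆ Icc (-κ) κ)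
    (hKpos0 : ∃ ε > 0, ∀ x : ℝ, |x| < ε → 0 < K x) (hmedian : kernelCDF K 0 = 1 / 2) (p : ℝ) :
    IsTransition (fun t => kernelCDF K (t - p)) p κ where
  measurable := (monotone_kernelCDF hKint hKpos).measurable.comp (measurable_id.sub_const p)
  nonneg _ := integral_nonneg hKpos
  le_one _ := hKnorm ▸ setIntegral_le_integral hKint (ae_of_all _ hKpos)
  eq_zero t ht := kernelCDF_eq_zero hKsupp (by linarith)
  eq_one t ht := hKnorm ▸ kernelCDF_eq_integral hKsupp (by linarith)
  lt_half t ht := hmedian ▸ kernelCDF_lt_kernelCDF_zero hKint hKpos hKpos0 (sub_neg.2 ht)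
  half_lt t ht := hmedian ▸ kernelCDF_zero_lt_kernelCDF hKint hKpos hKpos0 (sub_pos.2 ht)

end kernelCDF

/-- The value, in terms of `α`, reached after performing the fraction `T k` of each jump from
`α k.castSucc` to `α k.succ`. Both `stepOn j α` and its convolution with a kernel are of this
form pointwise. -/
def jumpSum {n : ℕ} (α : Fin (n + 1) → ℝ) (T : Fin n → ℝ) : ℝ :=
  α 0 + ∑ k, (α k.succ - α k.castSucc) * T k

section jumpSum

variable {n : ℕ} {j : Fin n → ℝ} {α : Fin (n + 1) → ℝ} {T : Fin n → ℝ}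

lemma jumpSum_add_single (i : Fin n) (c : ℝ) :
    jumpSum α (T + Pi.single i c) = jumpSum α T + (α i.succ - α i.castSucc) * c := by
  simp only [jumpSum, Pi.add_apply, mul_add, Finset.sum_add_distrib, Pi.single_apply, mul_ite,
    mul_zero, Finset.sum_ite_eq', Finset.mem_univ, if_true, add_assoc]

lemma jumpSum_ite_lt (m : Fin (n + 1)) :
    jumpSum α (fun k => if k.castSucc < m then 1 else 0) = α m := by
  induction m using Fin.induction with
  | zero => simp [jumpSum]
  | succ i ih =>
    have hT : (fun k : Fin n => if k.castSucc < i.succ then (1 : ℝ) else 0) =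
        (fun k => if k.castSucc < i.castSucc then 1 else 0) + Pi.single i 1 := by
      ext k
      rcases lt_trichotomy k i with h | rfl | h
      · simp [h, h.le, h.ne]
      · simp
      · simp [h.not_ge, h.not_gt, h.ne']
    rw [hT, jumpSum_add_single, ih, mul_one, add_sub_cancel]

lemma jumpSum_of_transition (i : Fin n) (hlt : ∀ k < i, T k = 1) (hgt : ∀ k > i, T k = 0) :
    jumpSum α T = α i.castSucc + (α i.succ - α i.castSucc) * T i := by
  have hT : T = (fun k => if k.castSucc < i.castSucc then 1 else 0) + Pi.single i (T i) := by
    ext k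
    rcases lt_trichotomy k i with h | rfl | h
    · simp [h, h.ne, hlt k h]
    · simp
    · simp [h.not_gt, h.ne', hgt k h]
  conv_lhs => rw [hT]
  rw [jumpSum_add_single, jumpSum_ite_lt]

lemma lt_iff_lt_card_filter (hj : StrictMono j) (t : ℝ) (k : Fin n) :
    j k < t ↔ (k : ℕ) < (Finset.univ.filter fun i => j i < t).card := by
  constructor
  · intro hkt
    have hsub : Finset.Iic k ⊆ Finset.univ.filter fun i => j i < t := fun i hi =>
      Finset.mem_filter_univ i |>.2 ((hj.monotone (Finset.mem_Iic.1 hi)).trans_lt hkt)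
    simpa only [Fin.card_Iic, Nat.add_one_le_iff] using Finset.card_le_card hsub
  · contrapose!
    intro htk
    have hsub : (Finset.univ.filter fun i => j i < t) ⊆ Finset.Iio k := fun i hi =>
      Finset.mem_Iio.2 (hj.lt_iff_lt.1 ((Finset.mem_filter_univ i |>.1 hi).trans_le htk))
    simpa only [Fin.card_Iio] using Finset.card_le_card hsub

lemma stepOn_eq_jumpSum (hj : StrictMono j) (t : ℝ) :
    stepOn j α t = jumpSum α fun k => unitStep (j k) t := by
  rw [stepOn, ← jumpSum_ite_lt (α := α)]
  congr 1
  ext k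
  rw [unitStep]
  congr 1
  rw [lt_iff_lt_card_filter hj, Fin.lt_def, Fin.val_castSucc]

lemma convK_stepOn_eq_jumpSum (hj : StrictMono j) {K : ℝ → ℝ} (hKint : Integrable K)
    (hKnorm : (∫ x, K x) = 1) (t : ℝ) :
    convK K (stepOn j α) t = jumpSum α fun k => kernelCDF K (t - j k) := by
  have hintegrand : ∀ s, K s * stepOn j α (t - s) = α 0 * K s +
      ∑ k, (α k.succ - α k.castSucc) * (Iio (t - j k)).indicator K s := by
    intro s
    rw [stepOn_eq_jumpSum hj, jumpSum, mul_add, Finset.mul_sum, mul_comm]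
    congr! 2 with k
    simp only [unitStep, indicator, mem_Iio, lt_sub_comm]
    split_ifs <;> ring
  simp only [convK, hintegrand]
  have hint : ∀ k, Integrable fun s =>
      (α k.succ - α k.castSucc) * (Iio (t - j k)).indicator K s :=
    fun k => (hKint.indicator measurableSet_Iio).const_mul _
  rw [integral_add (hKint.const_mul _) (integrable_finsetSum _ fun k _ => hint k),
    integral_finsetSum _ fun k _ => hint k]
  simp only [integral_const_mul, hKnorm, mul_one, integral_indicator measurableSet_Iio, jumpSum,
    kernelCDF, integral_Iic_eq_integral_Iio]

end jumpSum

instance : IsFiniteMeasure mu01 := by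
  rw [mu01]
  infer_instance

section Partition

variable {m : ℕ} {x : Fin (m + 1) → ℝ} {a : Fin m → ℝ} {u : ℝ → ℝ} {c d s t : ℝ}

lemma exists_castSucc_le_and_lt_succ {β : Type*} [LinearOrder β] {x : Fin (m + 1) → β} {t : β}
    (h0 : x 0 ≤ t) (h1 : t < x (Fin.last m)) : ∃ l : Fin m, x l.castSucc ≤ t ∧ t < x l.succ := by
  by_contra! hstep
  have hle : ∀ i, x i ≤ t := fun i => by
    induction i using Fin.induction with
    | zero => exact h0
    | succ i ih => exact hstep i ih
  exact (hle _).not_gt h1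

lemma ae_exists_mem_Ioo (h0 : x 0 = 0) (h1 : x (Fin.last m) = 1) :
    ∀ᵐ t ∂mu01, ∃ l : Fin m, t ∈ Ioo (x l.castSucc) (x l.succ) := by
  have hne : ∀ᵐ t ∂mu01, ∀ i, t ≠ x i :=
    ae_all_iff.2 fun i => ae_restrict_of_ae (Measure.ae_ne volume (x i))
  filter_upwards [hne, ae_restrict_mem measurableSet_Icc] with t htx ht
  have ht1 : t < x (Fin.last m) := (h1 ▸ ht.2).lt_of_ne (htx _)
  obtain ⟨l, hl, hl'⟩ := exists_castSucc_le_and_lt_succ (h0 ▸ ht.1) ht1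
  exact ⟨l, hl.lt_of_ne' (htx _), hl'⟩

lemma stepF_eq_of_mem_Ioo (hx : StrictMono x) {l : Fin m}
    (ht : t ∈ Ioo (x l.castSucc) (x l.succ)) : stepF x a t = a l := by
  have hunique : ∀ i ≠ l, t ∉ Ioo (x i.castSucc) (x i.succ) := fun i hil hti =>
    hil (le_antisymm (Fin.castSucc_lt_succ_iff.1 (hx.lt_iff_lt.1 (hti.1.trans ht.2)))
      (Fin.castSucc_lt_succ_iff.1 (hx.lt_iff_lt.1 (ht.1.trans hti.2))))
  rw [stepF, Finset.sum_eq_single_of_mem l (Finset.mem_univ l)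
    fun i _ hil => indicator_of_notMem (hunique i hil) _, indicator_of_mem ht]

lemma IsPCRep.comp (hu : IsPCRep u x a) (φ : ℝ → ℝ) :
    IsPCRep (fun t => φ (u t)) x fun l => φ (a l) := by
  obtain ⟨hx, h0, h1, hua⟩ := hu
  refine ⟨hx, h0, h1, ?_⟩
  filter_upwards [hua, ae_exists_mem_Ioo h0 h1] with t hut ⟨l, hl⟩
  rw [hut, stepF_eq_of_mem_Ioo hx hl, stepF_eq_of_mem_Ioo hx hl]

lemma IsPCRep.ae_eq_const (hu : IsPCRep u x a) (hc : 0 ≤ c) (hcd : c < d) (hd : d ≤ 1)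
    (hno : ∀ i, x i ∉ Ioo c d) : ∃ b, u =ᵐ[volume.restrict (Ioo c d)] fun _ => b := by
  obtain ⟨hx, h0, h1, hua⟩ := hu
  obtain ⟨l, hlc, hcl⟩ := exists_castSucc_le_and_lt_succ (h0 ▸ hc) (h1 ▸ hcd.trans_le hd)
  have hdl : d ≤ x l.succ := not_lt.1 fun h => hno _ ⟨hcl, h⟩
  have hsub : Ioo c d ⊆ Icc 0 1 := Ioo_subset_Icc_self.trans (Icc_subset_Icc hc hd)
  refine ⟨a l, ?_⟩
  filter_upwards [ae_restrict_of_ae_restrict_of_subset hsub hua, ae_restrict_mem measurableSet_Ioo]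
    with t hut ht
  rw [hut, stepF_eq_of_mem_Ioo hx (Ioo_subset_Ioo hlc hdl ht)]

lemma IsPCRep.ae_eq_ite (hu : IsPCRep u x a) (hc : 0 ≤ c) (hd : d ≤ 1) (hs : s ∈ Ioo c d)
    (hunique : ∀ i, x i ∈ Ioo c d → x i = s) :
    ∃ b b', u =ᵐ[volume.restrict (Ioo c d)] fun t => if s < t then b' else b := by
  obtain ⟨b, hb⟩ := hu.ae_eq_const hc hs.1 (hs.2.le.trans hd) fun i hi =>
    hi.2.ne (hunique i ⟨hi.1, hi.2.trans hs.2⟩)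
  obtain ⟨b', hb'⟩ := hu.ae_eq_const (hc.trans hs.1.le) hs.2 hd fun i hi =>
    hi.1.ne' (hunique i ⟨hs.1.trans hi.1, hi.2⟩)
  rw [EventuallyEq, ae_restrict_iff' measurableSet_Ioo] at hb hb'
  refine ⟨b, b', (ae_restrict_iff' measurableSet_Ioo).2 ?_⟩
  filter_upwards [hb, hb', Measure.ae_ne volume s] with t htb htb' hts ht
  rcases hts.lt_or_gt with h | h
  · rw [if_neg h.not_gt, htb ⟨ht.1, h⟩]
  · rw [if_pos h, htb' ⟨h, ht.2⟩]

lemma IsPC.exists_rep_jumps (hu : IsPC u) :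
    ∃ (x : Fin (jumps u + 2) → ℝ) (a : Fin (jumps u + 1) → ℝ), IsPCRep u x a := by
  obtain ⟨_ | m, x, a, hrep⟩ := hu
  · exact absurd (hrep.2.1.symm.trans hrep.2.2.1) zero_ne_one
  · exact Nat.sInf_mem (s := {m | ∃ (x : Fin (m + 2) → ℝ) (a : Fin (m + 1) → ℝ), IsPCRep u x a})
      ⟨m, x, a, hrep⟩

lemma IsPCRep.integrable (hu : IsPCRep u x a) : Integrable u mu01 := by
  have hstep : Integrable (stepF x a) mu01 := integrable_finsetSum _ fun l _ =>
    (integrable_const _).indicator measurableSet_Ioo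
  exact hstep.congr (EventuallyEq.symm hu.2.2.2)

lemma IsPCRep.sum_card_filter_le {x : Fin (m + 2) → ℝ} {a : Fin (m + 1) → ℝ}
    (hu : IsPCRep u x a) {ι : Type*} [Fintype ι] {I : ι → Set ℝ}
    [∀ i, DecidablePred (· ∈ I i)] (hI : ∀ i, I i ⊆ Ioo 0 1)
    (hdisj : Pairwise (Function.onFun Disjoint I)) :
    ∑ i, (Finset.univ.filter fun l => x l ∈ I i).card ≤ m := by
  obtain ⟨-, h0, h1, -⟩ := hu
  have hinterior : (Finset.univ.biUnion fun i => Finset.univ.filter fun l => x l ∈ I i) ⊆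
      ({0, Fin.last (m + 1)} : Finset (Fin (m + 2)))ᶜ := by
    intro l hl
    simp only [Finset.mem_biUnion, Finset.mem_univ, true_and, Finset.mem_filter] at hl
    obtain ⟨i, hi⟩ := hl
    simp only [Finset.mem_compl, Finset.mem_insert, Finset.mem_singleton, not_or]
    constructor <;> rintro rfl
    · exact lt_irrefl _ (h0 ▸ (hI i hi).1)
    · exact lt_irrefl _ (h1 ▸ (hI i hi).2)
  have hcard := Finset.card_le_card hinterior
  rwa [Finset.card_biUnion, Finset.card_compl, Fintype.card_fin,
    Finset.card_pair Fin.last_pos.ne, Nat.add_sub_cancel] at hcard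
  exact fun i _ k _ hik => Finset.disjoint_left.2 fun l hl hl' =>
    Set.disjoint_left.1 (hdisj hik) (Finset.mem_filter_univ l |>.1 hl)
      (Finset.mem_filter_univ l |>.1 hl')

end Partition

section jext

variable {n : ℕ} {j : Fin (n + 1) → ℝ} {α : Fin (n + 2) → ℝ}

lemma jext_zero : jext j 0 = 0 := rfl

lemma jext_last : jext j (Fin.last (n + 2)) = 1 := by
  rw [← Fin.succ_last, jext, Fin.cons_succ, Fin.snoc_last]

lemma jext_succ_castSucc (k : Fin (n + 1)) : jext j k.castSucc.succ = j k := by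
  rw [jext, Fin.cons_succ, Fin.snoc_castSucc]

lemma jext_castSucc_succ (k : Fin (n + 1)) : jext j k.succ.castSucc = j k := by
  rw [← Fin.succ_castSucc, jext_succ_castSucc]

lemma strictMono_jext (hj : StrictMono j) (hj0 : 0 < j 0) (hj1 : j (Fin.last n) < 1) :
    StrictMono (jext j) := by
  refine Fin.strictMono_iff_lt_succ.2 fun i => ?_
  induction i using Fin.cases with
  | zero => simpa only [Fin.castSucc_zero, jext_zero] using
      hj0.trans_eq (jext_succ_castSucc (j := j) 0).symm
  | succ i =>
    rw [jext_castSucc_succ]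
    induction i using Fin.lastCases with
    | last => rwa [Fin.succ_last, Fin.succ_last, jext_last]
    | cast i =>
      rw [Fin.succ_castSucc, jext_succ_castSucc]
      exact hj Fin.castSucc_lt_succ

lemma isPCRep_stepOn (hj : StrictMono j) (hj0 : 0 < j 0) (hj1 : j (Fin.last n) < 1) :
    IsPCRep (stepOn j α) (jext j) α := by
  have hext := strictMono_jext hj hj0 hj1
  refine ⟨hext, jext_zero, jext_last, ?_⟩
  filter_upwards [ae_exists_mem_Ioo (jext_zero (j := j)) jext_last] with t ⟨l, hl⟩
  have hpassed : ∀ k : Fin (n + 1), j k < t ↔ k.castSucc < l := fun k => by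
    constructor <;> intro hk
    · rw [← jext_succ_castSucc (j := j) k] at hk
      exact Fin.succ_lt_succ_iff.1 (hext.lt_iff_lt.1 (hk.trans hl.2))
    · rw [← jext_castSucc_succ (j := j) k]
      refine (hext.monotone ?_).trans_lt hl.1
      exact Fin.castSucc_le_castSucc_iff.2 (Fin.castSucc_lt_iff_succ_le.1 hk)
  rw [stepF_eq_of_mem_Ioo hext hl, stepOn_eq_jumpSum hj]
  simp only [unitStep, hpassed, jumpSum_ite_lt]

lemma jumps_stepOn_le (hj : StrictMono j) (hj0 : 0 < j 0) (hj1 : j (Fin.last n) < 1) :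
    jumps (stepOn j α) ≤ n + 1 :=
  Nat.sInf_le ⟨jext j, α, isPCRep_stepOn hj hj0 hj1⟩

lemma lmin_le_jext_sub (hj : StrictMono j) (hj0 : 0 < j 0) (hj1 : j (Fin.last n) < 1)
    {i k : Fin (n + 3)} (hik : i < k) : lmin j ≤ jext j k - jext j i := by
  obtain ⟨i, rfl⟩ := Fin.exists_castSucc_eq.2 (Fin.ne_last_of_lt hik)
  exact (Finset.inf'_le _ (Finset.mem_univ i)).trans (sub_le_sub_right
    ((strictMono_jext hj hj0 hj1).monotone (Fin.castSucc_lt_iff_succ_le.1 hik)) _)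

lemma lmin_le_sub (hj : StrictMono j) (hj0 : 0 < j 0) (hj1 : j (Fin.last n) < 1)
    {i k : Fin (n + 1)} (hik : i < k) : lmin j ≤ j k - j i := by
  have h := lmin_le_jext_sub hj hj0 hj1
    (Fin.succ_lt_succ_iff.2 (Fin.castSucc_lt_castSucc_iff.2 hik))
  rwa [jext_succ_castSucc, jext_succ_castSucc] at h

lemma lmin_le (hj : StrictMono j) (hj0 : 0 < j 0) (hj1 : j (Fin.last n) < 1)
    (k : Fin (n + 1)) : lmin j ≤ j k := by
  have h := lmin_le_jext_sub hj hj0 hj1 (Fin.succ_pos k.castSucc)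
  rwa [jext_succ_castSucc, jext_zero, sub_zero] at h

lemma lmin_le_one_sub (hj : StrictMono j) (hj0 : 0 < j 0) (hj1 : j (Fin.last n) < 1)
    (k : Fin (n + 1)) : lmin j ≤ 1 - j k := by
  have h := lmin_le_jext_sub hj hj0 hj1 (Fin.castSucc_lt_last k.succ)
  rwa [jext_castSucc_succ, jext_last] at h

lemma hjumpMin_le (k : Fin (n + 1)) : hjumpMin α ≤ |α k.succ - α k.castSucc| :=
  Finset.inf'_le _ (Finset.mem_univ k)

lemma le_hjumpMax (k : Fin (n + 1)) : |α k.succ - α k.castSucc| ≤ hjumpMax α :=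
  Finset.le_sup' (fun i : Fin (n + 1) => |α i.succ - α i.castSucc|) (Finset.mem_univ k)

lemma hjumpMin_pos (hadj : ∀ i : Fin (n + 1), α i.castSucc ≠ α i.succ) : 0 < hjumpMin α :=
  (Finset.lt_inf'_iff _).2 fun k _ => abs_sub_pos.2 (hadj k).symm

lemma hjumpMin_le_hjumpMax : hjumpMin α ≤ hjumpMax α := (hjumpMin_le 0).trans (le_hjumpMax 0)

end jext

/-- The share of the Potts functional that falls to the interval `(c, d)`: `γ` for each partition
point of `x` inside it, plus the `l1Excess` of `u` over `g` there. It makes the functional local: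
the full excess of `u` over `g` is at least the sum of these shares over disjoint intervals, less
`γ` for each jump of `g`. -/
def localCost {m : ℕ} (γ : ℝ) (f g u : ℝ → ℝ) (x : Fin (m + 1) → ℝ) (c d : ℝ) : ℝ :=
  γ * (Finset.univ.filter fun l => x l ∈ Ioo c d).card + l1Excess f g u c d

section LocalEstimate

variable {m : ℕ} {x : Fin (m + 1) → ℝ} {a : Fin m → ℝ} {F f g u : ℝ → ℝ}
  {γ κ p L A h c d : ℝ}

lemma IsTransition.lt_localCost_of_card_eq_zero (hF : IsTransition F p κ) (hL : κ ≤ L)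
    (hγ : γ ≤ L - 2 * κ) (hp0 : 0 ≤ p - L) (hp1 : p + L ≤ 1) (hu : IsPCRep u x a)
    (hcard : (Finset.univ.filter fun l => x l ∈ Ioo (p - L) (p + L)).card = 0) :
    γ < localCost γ F (unitStep p) u x (p - L) (p + L) := by
  have hno : ∀ l, x l ∉ Ioo (p - L) (p + L) := fun l hl =>
    Finset.card_eq_zero.1 hcard ▸ (Finset.mem_filter_univ l).2 hl |> Finset.notMem_empty l
  obtain ⟨b, hb⟩ := hu.ae_eq_const hp0 (by linarith [hF.pos]) hp1 hno
  rw [localCost, hcard, l1Excess_congr_ae (by linarith [hF.pos]) .rfl .rfl hb, Nat.cast_zero,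
    mul_zero, zero_add]
  exact hγ.trans_lt (hF.sub_lt_l1Excess_const hL)

lemma IsTransition.lt_or_eq_localCost_of_card_eq_one (hF : IsTransition F p κ) (hL : 3 * κ ≤ L)
    (hp0 : 0 ≤ p - L) (hp1 : p + L ≤ 1) (hu : IsPCRep u x a)
    (hcard : (Finset.univ.filter fun l => x l ∈ Ioo (p - L) (p + L)).card = 1) :
    γ < localCost γ F (unitStep p) u x (p - L) (p + L) ∨
      γ = localCost γ F (unitStep p) u x (p - L) (p + L) ∧
        u =ᵐ[volume.restrict (Ioo (p - L) (p + L))] unitStep p := by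
  obtain ⟨i, hi⟩ := Finset.card_eq_one.1 hcard
  have hmem : ∀ k, x k ∈ Ioo (p - L) (p + L) ↔ k = i := by
    simpa only [Finset.ext_iff, Finset.mem_filter_univ, Finset.mem_singleton] using hi
  have hiL := (hmem i).2 rfl
  obtain ⟨b, b', hb⟩ := hu.ae_eq_ite hp0 hp1 hiL fun k hk => by rw [(hmem k).1 hk]
  rw [localCost, hcard, Nat.cast_one, mul_one,
    l1Excess_congr_ae (by linarith [hF.pos]) .rfl .rfl hb]
  by_cases hstep : x i = p ∧ b = 0 ∧ b' = 1
  · obtain ⟨hip, rfl, rfl⟩ := hstep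
    rw [hip] at hb ⊢
    exact .inr ⟨(add_eq_left.2 l1Excess_self).symm, hb⟩
  · exact .inl (lt_add_of_pos_right γ (hF.l1Excess_ite_pos hL (Ioo_subset_Icc_self hiL) hstep))

lemma IsTransition.lt_localCost_of_two_le_card (hF : IsTransition F p κ) (hL : κ ≤ L)
    (hγ : κ ≤ γ) (hu : IntervalIntegrable u volume (p - L) (p + L))
    (hcard : 2 ≤ (Finset.univ.filter fun l => x l ∈ Ioo (p - L) (p + L)).card) :
    γ < localCost γ F (unitStep p) u x (p - L) (p + L) := by
  have hpaid : γ * 2 ≤ γ * (Finset.univ.filter fun l => x l ∈ Ioo (p - L) (p + L)).card := by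
    gcongr
    · linarith [hF.pos]
    · exact_mod_cast hcard
  rw [localCost]
  linarith [hF.neg_lt_l1Excess hL hu]

lemma intervalIntegrable_of_integrable_mu01 (hu : Integrable u mu01) (hc : 0 ≤ c) (hcd : c ≤ d)
    (hd : d ≤ 1) : IntervalIntegrable u volume c d :=
  (intervalIntegrable_iff_integrableOn_Icc_of_le hcd).2
    (IntegrableOn.mono_set (t := Icc 0 1) hu (Icc_subset_Icc hc hd))

lemma IsTransition.lt_or_eq_localCost (hF : IsTransition F p κ) (hL : 3 * κ ≤ L)
    (hκγ : κ ≤ γ) (hγL : γ ≤ L - 2 * κ) (hp0 : 0 ≤ p - L) (hp1 : p + L ≤ 1)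
    (hu : IsPCRep u x a) :
    γ < localCost γ F (unitStep p) u x (p - L) (p + L) ∨
      γ = localCost γ F (unitStep p) u x (p - L) (p + L) ∧
        u =ᵐ[volume.restrict (Ioo (p - L) (p + L))] unitStep p := by
  have hκL : κ ≤ L := by linarith [hF.pos]
  rcases lt_trichotomy (Finset.univ.filter fun l => x l ∈ Ioo (p - L) (p + L)).card 1
    with hcard | hcard | hcard
  · exact .inl (hF.lt_localCost_of_card_eq_zero hκL hγL hp0 hp1 hu (Nat.lt_one_iff.1 hcard))
  · exact hF.lt_or_eq_localCost_of_card_eq_one hL hp0 hp1 hu hcard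
  · exact .inl (hF.lt_localCost_of_two_le_card hκL hκγ
      (intervalIntegrable_of_integrable_mu01 hu.integrable hp0 (by linarith [hF.pos]) hp1) hcard)

lemma localCost_affine (hh : h ≠ 0) (hcd : c ≤ d)
    (hf : EqOn f (fun t => A + h * F t) (Ioo c d))
    (hg : EqOn g (fun t => A + h * unitStep p t) (Ioo c d)) :
    localCost γ f g u x c d =
      |h| * localCost (γ / |h|) F (unitStep p) (fun t => (u t - A) / h) x c d := by
  have hu : u = fun t => A + h * ((u t - A) / h) := by
    ext t
    rw [mul_div_cancel₀ _ hh, add_sub_cancel]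
  have hexcess : l1Excess f g u c d =
      |h| * l1Excess F (unitStep p) (fun t => (u t - A) / h) c d := by
    rw [← l1Excess_affine A h, ← hu]
    exact l1Excess_congr_ae hcd (ae_restrict_of_forall_mem measurableSet_Ioo hf)
      (ae_restrict_of_forall_mem measurableSet_Ioo hg) .rfl
  rw [localCost, localCost, hexcess, mul_add, ← mul_assoc, mul_div_cancel₀ _ (abs_ne_zero.2 hh)]

lemma IsTransition.lt_or_eq_localCost_affine (hF : IsTransition F p κ) (hL : 3 * κ ≤ L)
    (hh : h ≠ 0) (hκγ : κ * |h| ≤ γ) (hγL : γ ≤ |h| * (L - 2 * κ)) (hp0 : 0 ≤ p - L)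
    (hp1 : p + L ≤ 1) (hf : EqOn f (fun t => A + h * F t) (Ioo (p - L) (p + L)))
    (hg : EqOn g (fun t => A + h * unitStep p t) (Ioo (p - L) (p + L))) (hu : IsPCRep u x a) :
    γ < localCost γ f g u x (p - L) (p + L) ∨
      γ = localCost γ f g u x (p - L) (p + L) ∧
        u =ᵐ[volume.restrict (Ioo (p - L) (p + L))] g := by
  have hh' : 0 < |h| := abs_pos.2 hh
  rw [localCost_affine hh (by linarith [hF.pos]) hf hg]
  rcases hF.lt_or_eq_localCost hL ((le_div_iff₀ hh').2 hκγ) ((div_le_iff₀' hh').2 hγL) hp0 hp1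
    (hu.comp fun y => (y - A) / h) with hlt | ⟨heq, hae⟩
  · exact .inl ((div_lt_iff₀' hh').1 hlt)
  · refine .inr ⟨(div_eq_iff hh'.ne').1 heq |>.trans (mul_comm _ _), ?_⟩
    filter_upwards [hae, ae_restrict_mem measurableSet_Ioo] with t hut ht
    simp only [hg ht, ← hut, mul_div_cancel₀ _ hh, add_sub_cancel]

end LocalEstimate

section Localization

variable {ι : Type*} [Fintype ι] {c d : ι → ℝ} {f g u : ℝ → ℝ} {γ : ℝ}

lemma l1Excess_eq_setIntegral_Ioo {c d : ℝ} (hcd : c ≤ d) :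
    l1Excess f g u c d = ∫ t in Ioo c d, (|u t - f t| - |g t - f t|) := by
  rw [l1Excess, intervalIntegral.integral_of_le hcd, integral_Ioc_eq_integral_Ioo]

lemma L1dist_sub_L1dist_eq (hcd : ∀ i, c i ≤ d i) (hI : ∀ i, Ioo (c i) (d i) ⊆ Ioo 0 1)
    (hdisj : Pairwise (Function.onFun Disjoint fun i => Ioo (c i) (d i)))
    (hfg : ∀ t ∉ ⋃ i, Ioo (c i) (d i), f t = g t) (hf : Integrable f mu01)
    (hg : Integrable g mu01) (hu : Integrable u mu01) :
    L1dist u f - L1dist g f = ∑ i, l1Excess f g u (c i) (d i) +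
      ∫ t in Icc 0 1 \ ⋃ i, Ioo (c i) (d i), |u t - g t| := by
  set S := ⋃ i, Ioo (c i) (d i)
  have hSm : MeasurableSet S := .iUnion fun i => measurableSet_Ioo
  have hS : S ⊆ Icc 0 1 := iUnion_subset fun i => (hI i).trans Ioo_subset_Icc_self
  have hint : IntegrableOn (fun t => |u t - f t| - |g t - f t|) (Icc 0 1) :=
    (hu.sub hf).abs.sub (hg.sub hf).abs
  have hinside : ∫ t in S, (|u t - f t| - |g t - f t|) = ∑ i, l1Excess f g u (c i) (d i) := by
    rw [integral_iUnion_fintype (fun _ => measurableSet_Ioo) hdisj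
      fun i => hint.mono_set ((subset_iUnion _ i).trans hS)]
    exact Finset.sum_congr rfl fun i _ => (l1Excess_eq_setIntegral_Ioo (hcd i)).symm
  have houtside : ∫ t in Icc 0 1 \ S, |u t - g t| =
      ∫ t in Icc 0 1 \ S, (|u t - f t| - |g t - f t|) :=
    setIntegral_congr_fun (measurableSet_Icc.diff hSm) fun t ht => by simp [hfg t ht.2]
  rw [← hinside, houtside, setIntegral_sdiff hSm hint hS, add_sub_cancel]
  exact (integral_sub (hu.sub hf).abs (hg.sub hf).abs).symm

lemma pottsVal_add_le {x : Fin (jumps u + 2) → ℝ} {a : Fin (jumps u + 1) → ℝ} (hγ : 0 ≤ γ)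
    (hcd : ∀ i, c i ≤ d i) (hI : ∀ i, Ioo (c i) (d i) ⊆ Ioo 0 1)
    (hdisj : Pairwise (Function.onFun Disjoint fun i => Ioo (c i) (d i)))
    (hfg : ∀ t ∉ ⋃ i, Ioo (c i) (d i), f t = g t) (hf : Integrable f mu01)
    (hg : Integrable g mu01) (hjumps : jumps g ≤ Fintype.card ι) (hu : IsPCRep u x a) :
    PottsVal γ f g + (∑ i, (localCost γ f g u x (c i) (d i) - γ) +
      ∫ t in Icc 0 1 \ ⋃ i, Ioo (c i) (d i), |u t - g t|) ≤ PottsVal γ f u := by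
  have hcount : γ * ∑ i, ((Finset.univ.filter fun l => x l ∈ Ioo (c i) (d i)).card : ℝ) ≤
      γ * jumps u :=
    mul_le_mul_of_nonneg_left (by exact_mod_cast hu.sum_card_filter_le hI hdisj) hγ
  have hjumps' : γ * jumps g ≤ Fintype.card ι * γ := by
    rw [mul_comm]
    gcongr
  have hsum : ∑ i, (localCost γ f g u x (c i) (d i) - γ) =
      γ * ∑ i, ((Finset.univ.filter fun l => x l ∈ Ioo (c i) (d i)).card : ℝ) +
        ∑ i, l1Excess f g u (c i) (d i) - Fintype.card ι * γ := by
    simp only [localCost, Finset.sum_sub_distrib, Finset.sum_add_distrib, Finset.mul_sum,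
      Finset.sum_const, Finset.card_univ, nsmul_eq_mul]
  have hL1 := L1dist_sub_L1dist_eq hcd hI hdisj hfg hf hg hu.integrable
  rw [PottsVal, PottsVal]
  linarith

lemma ae_eq_of_setIntegral_diff_eq_zero {S : Set ℝ} (hS : MeasurableSet S)
    (hg : Integrable g mu01) (hu : Integrable u mu01)
    (hzero : ∫ t in Icc 0 1 \ S, |u t - g t| = 0) (hin : ∀ᵐ t, t ∈ S → u t = g t) :
    u =ᵐ[mu01] g := by
  have hint : IntegrableOn (fun t => |u t - g t|) (Icc 0 1 \ S) :=
    IntegrableOn.mono_set (t := Icc 0 1) (hu.sub hg).abs sdiff_subset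
  have hout := (ae_restrict_iff' (measurableSet_Icc.diff hS)).1
    ((setIntegral_eq_zero_iff_of_nonneg_ae (ae_of_all _ fun t => abs_nonneg _) hint).1 hzero)
  refine (ae_restrict_iff' measurableSet_Icc).2 ?_
  filter_upwards [hout, hin] with t htout htin ht
  by_cases htS : t ∈ S
  · exact htin htS
  · exact sub_eq_zero.1 (abs_eq_zero.1 (htout ⟨ht, htS⟩))

theorem pottsVal_le_and_ae_eq_of_le {x : Fin (jumps u + 2) → ℝ} {a : Fin (jumps u + 1) → ℝ}
    (hγ : 0 ≤ γ) (hcd : ∀ i, c i ≤ d i) (hI : ∀ i, Ioo (c i) (d i) ⊆ Ioo 0 1)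
    (hdisj : Pairwise (Function.onFun Disjoint fun i => Ioo (c i) (d i)))
    (hfg : ∀ t ∉ ⋃ i, Ioo (c i) (d i), f t = g t) (hf : Integrable f mu01)
    (hg : Integrable g mu01) (hjumps : jumps g ≤ Fintype.card ι) (hu : IsPCRep u x a)
    (hlocal : ∀ i, γ < localCost γ f g u x (c i) (d i) ∨
      γ = localCost γ f g u x (c i) (d i) ∧ u =ᵐ[volume.restrict (Ioo (c i) (d i))] g) :
    PottsVal γ f g ≤ PottsVal γ f u ∧ (PottsVal γ f u ≤ PottsVal γ f g → u =ᵐ[mu01] g) := by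
  have hbound := pottsVal_add_le hγ hcd hI hdisj hfg hf hg hjumps hu
  have hterm : ∀ i ∈ Finset.univ, 0 ≤ localCost γ f g u x (c i) (d i) - γ := fun i _ =>
    sub_nonneg.2 ((hlocal i).elim le_of_lt fun h => h.1.le)
  have hsum := Finset.sum_nonneg hterm
  have houter : 0 ≤ ∫ t in Icc 0 1 \ ⋃ i, Ioo (c i) (d i), |u t - g t| :=
    integral_nonneg fun t => abs_nonneg _
  refine ⟨by linarith, fun hle => ?_⟩
  have hzero := (Finset.sum_eq_zero_iff_of_nonneg hterm).1 (by linarith)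
  have hin : ∀ i, ∀ᵐ t, t ∈ Ioo (c i) (d i) → u t = g t := fun i =>
    (ae_restrict_iff' measurableSet_Ioo).1 ((hlocal i).resolve_left fun hlt =>
      (sub_pos.2 hlt).ne' (hzero i (Finset.mem_univ i))).2
  refine ae_eq_of_setIntegral_diff_eq_zero (.iUnion fun i => measurableSet_Ioo) hg hu.integrable
    (by linarith) ?_
  filter_upwards [ae_all_iff.2 hin] with t ht hmem
  obtain ⟨i, hi⟩ := mem_iUnion.1 hmem
  exact ht i hi

end Localization

section SmoothedSteps

variable {n : ℕ} {j : Fin n → ℝ} {α : Fin (n + 1) → ℝ} {F : Fin n → ℝ → ℝ} {κ L : ℝ}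

lemma eqOn_jumpSum_transition (hF : ∀ k, IsTransition (F k) (j k) κ) (hκL : κ ≤ L)
    (hsep : ∀ i k, i < k → 2 * L ≤ j k - j i) (i : Fin n) :
    EqOn (fun t => jumpSum α fun k => F k t)
      (fun t => α i.castSucc + (α i.succ - α i.castSucc) * F i t) (Ioo (j i - L) (j i + L)) :=
  fun t ht => jumpSum_of_transition i
    (fun k hk => (hF k).eq_one t (by linarith [hsep k i hk, ht.1]))
    (fun k hk => (hF k).eq_zero t (by linarith [hsep i k hk, ht.2]))

lemma jumpSum_transition_eq_of_notMem (hF : ∀ k, IsTransition (F k) (j k) κ) (hκL : κ ≤ L) {t : ℝ}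
    (ht : t ∉ ⋃ k, Ioo (j k - L) (j k + L)) :
    (jumpSum α fun k => F k t) = jumpSum α fun k => unitStep (j k) t := by
  congr 1
  ext k
  refine (hF k).eq_unitStep fun hk => ht (mem_iUnion.2 ⟨k, ?_⟩)
  exact Ioo_subset_Ioo (by linarith) (by linarith) hk

lemma integrable_jumpSum_transition {μ : Measure ℝ} [IsFiniteMeasure μ]
    (hF : ∀ k, IsTransition (F k) (j k) κ) : Integrable (fun t => jumpSum α fun k => F k t) μ :=
  (integrable_const _).add (integrable_finsetSum _ fun k _ => (hF k).integrable.const_mul _)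

lemma pairwise_disjoint_Ioo_of_separated (hsep : ∀ i k, i < k → 2 * L ≤ j k - j i) :
    Pairwise (Function.onFun Disjoint fun i => Ioo (j i - L) (j i + L)) := by
  refine (pairwise_disjoint_on _).2 fun i k hik => Set.disjoint_left.2 fun t hti htk => ?_
  linarith [hsep i k hik, hti.2, htk.1]

end SmoothedSteps

section Main

variable {n : ℕ} {j : Fin (n + 1) → ℝ} {α : Fin (n + 2) → ℝ} {κ γ : ℝ}

theorem pottsVal_stepOn_le_and_ae_eq_of_le (hj : StrictMono j) (hj0 : 0 < j 0)
    (hj1 : j (Fin.last n) < 1) (hadj : ∀ i : Fin (n + 1), α i.castSucc ≠ α i.succ)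
    {F : Fin (n + 1) → ℝ → ℝ} (hF : ∀ k, IsTransition (F k) (j k) κ) {f u : ℝ → ℝ}
    (hf : ∀ t, f t = jumpSum α fun k => F k t) (hγlo : κ * hjumpMax α ≤ γ)
    (hγhi : γ ≤ hjumpMin α * (lmin j / 2 - 2 * κ)) (hu : IsPC u) :
    PottsVal γ f (stepOn j α) ≤ PottsVal γ f u ∧
      (PottsVal γ f u ≤ PottsVal γ f (stepOn j α) → u =ᵐ[mu01] stepOn j α) := by
  obtain ⟨x, a, hx⟩ := hu.exists_rep_jumps
  obtain rfl : f = fun t => jumpSum α fun k => F k t := funext hf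
  have hg : stepOn j α = fun t => jumpSum α fun k => unitStep (j k) t :=
    funext (stepOn_eq_jumpSum hj)
  have hκ : 0 < κ := (hF 0).pos
  set L := lmin j / 2 with hL_def
  have hκL : κ ≤ L - 2 * κ := by
    refine le_of_mul_le_mul_left (LE.le.trans ?_ (hγlo.trans hγhi)) (hjumpMin_pos hadj)
    rw [mul_comm]
    gcongr
    exact hjumpMin_le_hjumpMax
  have hL : 3 * κ ≤ L := by linarith
  have hsep : ∀ i k, i < k → 2 * L ≤ j k - j i := fun i k hik => by
    linarith [lmin_le_sub hj hj0 hj1 hik, hL_def]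
  have hstep : ∀ k, IsTransition (unitStep (j k)) (j k) κ := fun k => isTransition_unitStep _ hκ
  have hleft : ∀ i, 0 ≤ j i - L := fun i => by linarith [lmin_le hj hj0 hj1 i, hL_def]
  have hright : ∀ i, j i + L ≤ 1 := fun i => by linarith [lmin_le_one_sub hj hj0 hj1 i, hL_def]
  have hγ : ∀ i : Fin (n + 1), κ * |α i.succ - α i.castSucc| ≤ γ := fun i =>
    (mul_le_mul_of_nonneg_left (le_hjumpMax i) hκ.le).trans hγlo
  refine pottsVal_le_and_ae_eq_of_le (ι := Fin (n + 1)) (c := fun i => j i - L)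
    (d := fun i => j i + L) ((mul_nonneg hκ.le (abs_nonneg _)).trans (hγ 0)) (fun i => by linarith)
    (fun i => Ioo_subset_Ioo (hleft i) (hright i)) (pairwise_disjoint_Ioo_of_separated hsep)
    (fun t ht => ?_) (integrable_jumpSum_transition hF) ?_ ?_ hx fun i => ?_
  · rw [hg, jumpSum_transition_eq_of_notMem hF (by linarith) ht]
  · rw [hg]
    exact integrable_jumpSum_transition hstep
  · simpa only [Fintype.card_fin] using jumps_stepOn_le hj hj0 hj1
  · refine (hF i).lt_or_eq_localCost_affine hL (sub_ne_zero.2 (hadj i).symm) (hγ i) ?_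
      (hleft i) (hright i) (eqOn_jumpSum_transition hF (by linarith) hsep i) ?_ hx
    · exact hγhi.trans (mul_le_mul_of_nonneg_right (hjumpMin_le i) (hκ.le.trans hκL))
    · rw [hg]
      exact eqOn_jumpSum_transition hstep (by linarith) hsep i

theorem statement_16_general (hj : StrictMono j) (hj0 : 0 < j 0) (hj1 : j (Fin.last n) < 1)
    (hadj : ∀ i : Fin (n + 1), α i.castSucc ≠ α i.succ) {K : ℝ → ℝ} (hKint : Integrable K)
    (hKpos : ∀ x, 0 ≤ K x) (hKnorm : (∫ x, K x) = 1) (hKsupp : Function.support K ⊆ Icc (-κ) κ)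
    (hKpos0 : ∃ ε > 0, ∀ x : ℝ, |x| < ε → 0 < K x) (hmedian : ∫ x in Iic 0, K x = 1 / 2)
    (hγlo : κ * hjumpMax α ≤ γ) (hγhi : γ ≤ hjumpMin α * (lmin j / 2 - 2 * κ)) :
    (∀ u : ℝ → ℝ, IsPC u →
      PottsVal γ (convK K (stepOn j α)) (stepOn j α) ≤ PottsVal γ (convK K (stepOn j α)) u) ∧
    (∀ u : ℝ → ℝ, IsPC u →
      PottsVal γ (convK K (stepOn j α)) u ≤ PottsVal γ (convK K (stepOn j α)) (stepOn j α) →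
      ∀ᵐ t ∂mu01, u t = stepOn j α t) := by
  have hF : ∀ k, IsTransition (fun t => kernelCDF K (t - j k)) (j k) κ := fun k =>
    isTransition_kernelCDF hKint hKpos hKnorm hKsupp hKpos0 hmedian (j k)
  have hmain := fun (u : ℝ → ℝ) (hu : IsPC u) => pottsVal_stepOn_le_and_ae_eq_of_le hj hj0 hj1 hadj
    hF (convK_stepOn_eq_jumpSum hj hKint hKnorm) hγlo hγhi hu
  exact ⟨fun u hu => (hmain u hu).1, fun u hu => (hmain u hu).2⟩

end Main

theorem statement_16
    (n : ℕ) (j : Fin (n + 1) → ℝ) (α : Fin (n + 2) → ℝ)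
    (hj : StrictMono j) (hj0 : 0 < j 0) (hj1 : j (Fin.last n) < 1)
    (hadj : ∀ i : Fin (n + 1), α i.castSucc ≠ α i.succ)
    (K : ℝ → ℝ) (κ : ℝ) (hκ : 0 < κ)
    (hKint : Integrable K) (hKpos : ∀ x, 0 ≤ K x)
    (hKsym : ∀ x, K (-x) = K x) (hKnorm : (∫ x, K x) = 1)
    (hKsupp : Function.support K ⊆ Set.Icc (-κ) κ)
    (hKpos0 : ∃ ε > 0, ∀ x : ℝ, |x| < ε → 0 < K x)
    (hκb : κ ≤ hjumpMin α * lmin j / (2 * (8 * hjumpMax α + hjumpMin α)))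
    (γ : ℝ)
    (hγlo : 2 * κ * hjumpMax α ≤ γ)
    (hγhi : γ ≤ (1 / 2) * hjumpMin α * lmin j - (hjumpMin α + 6 * hjumpMax α) * κ) :
    -- `g = stepOn j α` minimizes the Potts functional with data `f = K * g` …
    (∀ u : ℝ → ℝ, IsPC u →
      PottsVal γ (convK K (stepOn j α)) (stepOn j α) ≤ PottsVal γ (convK K (stepOn j α)) u) ∧
    -- … and it is the unique minimizer (up to equality a.e. on `[0,1]`)
    (∀ u : ℝ → ℝ, IsPC u →
      PottsVal γ (convK K (stepOn j α)) u ≤ PottsVal γ (convK K (stepOn j α)) (stepOn j α) →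
      ∀ᵐ t ∂mu01, u t = stepOn j α t) := by
  have hmin : 0 < hjumpMin α * κ := mul_pos (hjumpMin_pos hadj) hκ
  have hminmax : hjumpMin α * κ ≤ hjumpMax α * κ := by gcongr; exact hjumpMin_le_hjumpMax
  exact statement_16_general hj hj0 hj1 hadj hKint hKpos hKnorm hKsupp hKpos0
    (hKnorm ▸ kernelCDF_zero hKint hKsym) (by linarith) (by linarith)
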